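/- Let M=(Q,Γ,Δ,q₀,γ₀) be a DCFS, k∈ℕ, F⊆Q, and let P be the stratified-trace PDA constructed from M, k and F. Then some state in F is k-stratified reachable by M if and only if there exist words σ_i∈Σ_i* for i=0,…,k such that σ₀σ₁⋯σ_k∈Traces_{T(P)}({(q₀,⊥)},F×{⊥}) and, for every γ∈Γ and every i∈{0,…,k}, |σ_i|_{(γ,i,◁)} ≤ |σ_{i−1}|_{(γ,i,▷)}, where σ_{−1} denotes the single-letter word (γ₀,0,▷). -/

import Mathlib

namespace DCPSFormal

/-- Rules of a dynamic network of concurrent pushdown systems (DCPS):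
creation rules `⟨q,γ⟩ → ⟨q',u⟩ ▷ α` (with `α = none` meaning `ε`),
interruption rules `⟨q,γ⟩ ↦ ⟨q',u⟩`, and resumption rules `q ↦ q' ◁ γ`. -/
inductive Rule (Q Γ : Type*) where
  | cr : Q → Γ → Q → List Γ → Option Γ → Rule Q Γ
  | intr : Q → Γ → Q → List Γ → Rule Q Γ
  | res : Q → Γ → Q → Rule Q Γ

/-- A DCPS: a set of rules, an initial state and an initial stack symbol. -/
structure DCPS (Q Γ : Type*) where
  rules : Set (Rule Q Γ)
  q0 : Q
  γ0 : Γ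

/-- Well-formedness of a DCPS: every pushed word has length at most 2. -/
def IsDCPSWf {Q Γ : Type*} (M : DCPS Q Γ) : Prop :=
  ∀ r ∈ M.rules,
    match r with
    | .cr _ _ _ u _ => u.length ≤ 2
    | .intr _ _ _ u => u.length ≤ 2
    | .res _ _ _ => True

/-- A DCFS is a DCPS in which every pushed word has length at most 1. -/
def IsDCFS {Q Γ : Type*} (M : DCPS Q Γ) : Prop :=
  ∀ r ∈ M.rules,
    match r with
    | .cr _ _ _ u _ => u.length ≤ 1
    | .intr _ _ _ u => u.length ≤ 1
    | .res _ _ _ => True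

/-- A configuration of a DCPS: global state, optional active local configuration
(stack content and switch number), and a finitely supported multiset of pending
local configurations. -/
structure Config (Q Γ : Type*) where
  state : Q
  active : Option (List Γ × ℕ)
  idle : (List Γ × ℕ) →₀ ℕ

/-- The thread possibly spawned by a creation rule with creation component `α`
when the active thread has switch number `i`. -/
noncomputable def spawnOf {Γ : Type*} (α : Option Γ) (i : ℕ) : (List Γ × ℕ) →₀ ℕ :=
  match α with
  | none => 0
  | some a => Finsupp.single ([a], i + 1) 1

/-- The transition system `T(M)` of a DCPS, with steps labelled by rules. -/
inductive Step {Q Γ : Type*} (M : DCPS Q Γ) : Rule Q Γ → Config Q Γ → Config Q Γ → Prop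
  | cr {q γ q' u α w i V} :
      Rule.cr q γ q' u α ∈ M.rules →
      Step M (.cr q γ q' u α) ⟨q, some (γ :: w, i), V⟩ ⟨q', some (u ++ w, i), V + spawnOf α i⟩
  | intr {q γ q' u w i V} :
      Rule.intr q γ q' u ∈ M.rules →
      Step M (.intr q γ q' u) ⟨q, some (γ :: w, i), V⟩
        ⟨q', none, V + Finsupp.single (u ++ w, i + 1) 1⟩
  | res {q γ q' w i V} :
      Rule.res q γ q' ∈ M.rules →
      Step M (.res q γ q') ⟨q, none, V + Finsupp.single (γ :: w, i) 1⟩ ⟨q', some (γ :: w, i), V⟩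

/-- `c ∈ Conf_I(M)`: the active thread exists and its switch number lies in `I`. -/
def ActiveIn {Q Γ : Type*} (I : Set ℕ) (c : Config Q Γ) : Prop :=
  ∃ w i, c.active = some (w, i) ∧ i ∈ I

/-- The `I`-bounded transition system `T_I(M)`. -/
def StepIn {Q Γ : Type*} (M : DCPS Q Γ) (I : Set ℕ) (r : Rule Q Γ) (c c' : Config Q Γ) : Prop :=
  Step M r c c' ∧ (ActiveIn I c ∨ ActiveIn I c')

/-- Reachability in `T(M)`. -/
def Reaches {Q Γ : Type*} (M : DCPS Q Γ) : Config Q Γ → Config Q Γ → Prop :=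
  Relation.ReflTransGen (fun a b => ∃ r, Step M r a b)

/-- Reachability in `T_I(M)`. -/
def ReachesIn {Q Γ : Type*} (M : DCPS Q Γ) (I : Set ℕ) : Config Q Γ → Config Q Γ → Prop :=
  Relation.ReflTransGen (fun a b => ∃ r, StepIn M I r a b)

/-- The initial configuration of a DCPS. -/
noncomputable def initConfig {Q Γ : Type*} (M : DCPS Q Γ) : Config Q Γ :=
  ⟨M.q0, none, Finsupp.single ([M.γ0], 0) 1⟩

/-- `q` is reachable by `M`. -/
def StateReachable {Q Γ : Type*} (M : DCPS Q Γ) (q : Q) : Prop :=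
  ∃ c, Reaches M (initConfig M) c ∧ c.active = none ∧ c.state = q

/-- `q` is `k`-bounded reachable by `M`. -/
def KBoundedReachable {Q Γ : Type*} (M : DCPS Q Γ) (k : ℕ) (q : Q) : Prop :=
  ∃ c, ReachesIn M {i | i ≤ k} (initConfig M) c ∧ c.active = none ∧ c.state = q

/-- `q` is `k`-stratified reachable by `M`. -/
def KStratifiedReachable {Q Γ : Type*} (M : DCPS Q Γ) (k : ℕ) (q : Q) : Prop :=
  ∃ c : ℕ → Config Q Γ, c 0 = initConfig M ∧
    (∀ l ≤ k, ReachesIn M {l} (c l) (c (l + 1))) ∧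
    (c (k + 1)).active = none ∧ (c (k + 1)).state = q

/-- A labelled run in a labelled transition system. -/
inductive LRun {C L : Type*} (step : L → C → C → Prop) : List L → C → C → Prop
  | nil (c) : LRun step [] c c
  | cons {l τ c c' c''} : step l c c' → LRun step τ c' c'' → LRun step (l :: τ) c c''

/-- A pushdown automaton with states `S`, input alphabet `A` and stack alphabet `Γ`. -/
structure PDA (S A Γ : Type*) where
  trans : Set ((S × Γ) × Option A × (S × List Γ))
  p0 : S
  γ0 : Γ
  final : Set S

/-- A single (possibly `ε`-labelled) step of a PDA. -/
inductive PDAStep {S A Γ : Type*} (P : PDA S A Γ) :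
    Option A → (S × List Γ) → (S × List Γ) → Prop
  | mk {p γ a p' u w} : ((p, γ), a, (p', u)) ∈ P.trans →
      PDAStep P a (p, γ :: w) (p', u ++ w)

/-- A run of a PDA labelled by the word obtained by concatenating all non-`ε` labels. -/
inductive PDATrace {S A Γ : Type*} (P : PDA S A Γ) :
    List A → (S × List Γ) → (S × List Γ) → Prop
  | nil (c) : PDATrace P [] c c
  | eps {v c c' c''} : PDAStep P none c c' → PDATrace P v c' c'' → PDATrace P v c c''
  | cons {a v c c' c''} : PDAStep P (some a) c c' → PDATrace P v c' c'' →
      PDATrace P (a :: v) c c''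

/-- The language of a PDA (acceptance by final state). -/
def PDALang {S A Γ : Type*} (P : PDA S A Γ) : Set (List A) :=
  { v | ∃ p w, p ∈ P.final ∧ PDATrace P v (P.p0, [P.γ0]) (p, w) }

/-- A finite state automaton. -/
structure FSA (S A : Type*) where
  trans : Set (S × Option A × S)
  init : Set S
  final : Set S

/-- A run of an FSA labelled by a word (`ε`-labels contribute nothing). -/
inductive FSARun {S A : Type*} (Au : FSA S A) : List A → S → S → Prop
  | nil (s) : FSARun Au [] s s
  | eps {v s s' s''} : (s, none, s') ∈ Au.trans → FSARun Au v s' s'' → FSARun Au v s s''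
  | cons {a v s s' s''} : (s, some a, s') ∈ Au.trans → FSARun Au v s' s'' →
      FSARun Au (a :: v) s s''

/-- The language of an FSA. -/
def FSALang {S A : Type*} (Au : FSA S A) : Set (List A) :=
  { v | ∃ s ∈ Au.init, ∃ s' ∈ Au.final, FSARun Au v s s' }

/-- A vector addition system with states of dimension `n`. -/
structure VASS (n : ℕ) (S A : Type*) where
  δ : S → A → S × (Fin n → ℤ)
  s0 : S
  v0 : Fin n → ℕ

/-- A step of a VASS: `(q₁,u₁) →ᵃ (q₂,u₂)` iff `δ(q₁,a) = (q₂, u₂ - u₁)`. -/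
def VStep {n : ℕ} {S A : Type*} (V : VASS n S A) (a : A) :
    (S × (Fin n → ℕ)) → (S × (Fin n → ℕ)) → Prop :=
  fun c c' => (V.δ c.1 a).1 = c'.1 ∧ ∀ i, (c'.2 i : ℤ) = (c.2 i : ℤ) + (V.δ c.1 a).2 i

/-- Reachability in the transition system of a VASS. -/
def VReaches {n : ℕ} {S A : Type*} (V : VASS n S A) :
    (S × (Fin n → ℕ)) → (S × (Fin n → ℕ)) → Prop :=
  Relation.ReflTransGen (fun c c' => ∃ a, VStep V a c c')

/-- A state `s` is reachable by the VASS `V`. -/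
def VStateReachable {n : ℕ} {S A : Type*} (V : VASS n S A) (s : S) : Prop :=
  ∃ u, VReaches V (V.s0, V.v0) (s, u)

/-- The `i`-th unit vector. -/
def unitVec {m : ℕ} (i : Fin m) : Fin m → ℤ := fun j => if j = i then 1 else 0

/-- The three kinds of letters of the stratified-trace PDA: `▷` (spawn/interrupt),
`◁` (resume), and `−` (silent). -/
inductive Dir where
  | spawn : Dir
  | resume : Dir
  | silent : Dir
deriving DecidableEq

/-- Letters of the stratified-trace PDA: triples over `Γ ∪ {ε}`, a switch number,
and a direction. -/
abbrev Lbl (Γ : Type*) := Option Γ × ℕ × Dir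

/-- The sub-alphabet `Σ_i = ((Γ∪{ε})×{i+1}×{▷}) ∪ (Γ×{i}×{◁}) ∪ {(ε,i,−)}`. -/
def SigmaI {Γ : Type*} (i : ℕ) : Set (Lbl Γ) :=
  { l | (∃ α : Option Γ, l = (α, i + 1, Dir.spawn)) ∨
        (∃ γ : Γ, l = (some γ, i, Dir.resume)) ∨ l = (none, i, Dir.silent) }

/-- Stack symbols of the stratified-trace PDA: `⊥` (= `none`) or a pair
`(w,i)` with `w ∈ Γ ∪ {ε}` and `i` a switch number. -/
abbrev PSym (Γ : Type*) := Option (Option Γ × ℕ)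

/-- The transitions of the stratified-trace PDA constructed from a DCFS `M` and `k`
(the pushed word `u` of a DCFS rule, of length at most 1, is represented by `u.head?`). -/
inductive STrans {Q Γ : Type*} (M : DCPS Q Γ) (k : ℕ) :
    ((Q × PSym Γ) × Option (Lbl Γ) × (Q × List (PSym Γ))) → Prop
  | silent {q γ q' u} (i : ℕ) : Rule.cr q γ q' u none ∈ M.rules → i ≤ k →
      STrans M k ((q, some (some γ, i)), some (none, i, Dir.silent), (q', [some (u.head?, i)]))
  | spawn {q γ q' u a} (i : ℕ) : Rule.cr q γ q' u (some a) ∈ M.rules → i ≤ k →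
      STrans M k
        ((q, some (some γ, i)), some (some a, i + 1, Dir.spawn), (q', [some (u.head?, i)]))
  | intr {q γ q' u} (i : ℕ) : Rule.intr q γ q' u ∈ M.rules → i ≤ k →
      STrans M k ((q, some (some γ, i)), some (u.head?, i + 1, Dir.spawn), (q', [none]))
  | res {q γ q'} (i : ℕ) : Rule.res q γ q' ∈ M.rules → i ≤ k →
      STrans M k ((q, none), some (some γ, i, Dir.resume), (q', [some (some γ, i)]))

/-- The stratified-trace PDA constructed from a DCFS `M`, `k ∈ ℕ` and `F ⊆ Q`. -/
def stratPDA {Q Γ : Type*} (M : DCPS Q Γ) (k : ℕ) (F : Set Q) : PDA Q (Lbl Γ) (PSym Γ) where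
  trans := { t | STrans M k t }
  p0 := M.q0
  γ0 := none
  final := F


section Helpers
variable {Q Γ : Type} [DecidableEq Q] [DecidableEq Γ]

def Rel (c : Config Q Γ) (x : Q × List (PSym Γ)) : Prop :=
  ∃ s : PSym Γ, x = (c.state, [s]) ∧ c.active = s.map (fun p => (p.1.toList, p.2))

def GoodIdle (c : Config Q Γ) : Prop :=
  ∀ w i, c.idle (w, i) ≠ 0 → w.length ≤ 1

lemma trace_append {S A G : Type} {P : PDA S A G} {u v : List A} {a b c : S × List G}
    (h : PDATrace P u a b) (h' : PDATrace P v b c) : PDATrace P (u ++ v) a c := by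
  induction h with
  | nil => exact h'
  | eps s _ ih => exact .eps s (ih h')
  | cons s _ ih => exact .cons s (ih h')

lemma trace_split {S A G : Type} {P : PDA S A G} {w : List A} {a c : S × List G}
    (h : PDATrace P w a c) : ∀ u v, w = u ++ v →
    ∃ b, PDATrace P u a b ∧ PDATrace P v b c := by
  induction h with
  | nil c =>
    intro u v e
    obtain ⟨rfl, rfl⟩ := List.append_eq_nil_iff.mp e.symm
    exact ⟨c, .nil _, .nil _⟩
  | eps s _ ih =>
    intro u v e
    obtain ⟨b, h1, h2⟩ := ih u v e
    exact ⟨b, .eps s h1, h2⟩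
  | @cons a v' c c' c'' s t ih =>
    intro u v e
    cases u with
    | nil =>
      simp only [List.nil_append] at e
      subst e
      exact ⟨c, .nil _, .cons s t⟩
    | cons x u =>
      simp only [List.cons_append, List.cons.injEq] at e
      obtain ⟨rfl, e⟩ := e
      obtain ⟨b, h1, h2⟩ := ih u v e
      exact ⟨b, .cons s h1, h2⟩

lemma head_toList {u : List Γ} (h : u.length ≤ 1) : u.head?.toList = u := by
  match u, h with
  | [], _ => rfl
  | [a], _ => rfl

lemma fwd_step (M : DCPS Q Γ) (hd : IsDCFS M) (k : ℕ) (F : Set Q) (l : ℕ) (hl : l ≤ k)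
    {r : Rule Q Γ} {c c' : Config Q Γ} (h : StepIn M {l} r c c') (x : Q × List (PSym Γ))
    (hx : Rel c x) (hg : GoodIdle c) :
    GoodIdle c' ∧ ∃ a y, a ∈ SigmaI l ∧ Rel c' y ∧ PDAStep (stratPDA M k F) (some a) x y ∧
      ∀ γ : Γ, c'.idle ([γ], l + 1) = c.idle ([γ], l + 1)
          + [a].count ((some γ, l + 1, Dir.spawn) : Lbl Γ) ∧
        c'.idle ([γ], l) + [a].count ((some γ, l, Dir.resume) : Lbl Γ) = c.idle ([γ], l) ∧
        ∀ j, l + 1 < j → c'.idle ([γ], j) = c.idle ([γ], j) := by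
  obtain ⟨h, hI⟩ := h
  obtain ⟨s, rfl, hs⟩ := hx
  cases h with
  | @cr q γ q' u α w i V hr =>
    have hi : i = l := by
      rcases hI with ⟨w', j, e, hj⟩ | ⟨w', j, e, hj⟩ <;> simp at e hj <;> omega
    subst hi
    have hu : u.length ≤ 1 := hd _ hr
    obtain ⟨rfl, rfl⟩ : s = some (some γ, i) ∧ w = [] := by
      rcases s with _ | ⟨_ | g, j⟩ <;> simp at hs
      obtain ⟨⟨rfl, rfl⟩, rfl⟩ := hs
      simp
    cases α with
    | none =>
      refine ⟨?_, (none, i, Dir.silent), (q', [some (u.head?, i)]), ?_, ?_, ?_, ?_⟩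
      · simpa [GoodIdle, spawnOf] using hg
      · simp [SigmaI]
      · exact ⟨_, rfl, by simp [head_toList hu]⟩
      · exact PDAStep.mk (P := stratPDA M k F) (w := []) (STrans.silent i hr hl)
      · intro γ; simp [spawnOf]
    | some a =>
      refine ⟨?_, (some a, i+1, Dir.spawn), (q', [some (u.head?, i)]), ?_, ?_, ?_, ?_⟩
      · intro w j hw
        by_cases e : ([a], i + 1) = (w, j)
        · simp only [Prod.mk.injEq] at e
          simp [← e.1]
        · apply hg w j
          simpa [spawnOf, Finsupp.single_apply, e] using hw
      · simp [SigmaI]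
      · exact ⟨_, rfl, by simp [head_toList hu]⟩
      · exact PDAStep.mk (P := stratPDA M k F) (w := []) (STrans.spawn i hr hl)
      · intro γ
        refine ⟨?_, ?_, ?_⟩
        · simp [spawnOf, Finsupp.single_apply, List.count_cons]
        · simp [spawnOf, Finsupp.single_apply]
        · intro j hj
          simp [spawnOf, Finsupp.single_apply]
          omega
  | @intr q γ q' u w i V hr =>
    have hi : i = l := by
      rcases hI with ⟨w', j, e, hj⟩ | ⟨w', j, e, hj⟩ <;> simp at e hj <;> omega
    subst hi
    have hu : u.length ≤ 1 := hd _ hr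
    obtain ⟨rfl, rfl⟩ : s = some (some γ, i) ∧ w = [] := by
      rcases s with _ | ⟨_ | g, j⟩ <;> simp at hs
      obtain ⟨⟨rfl, rfl⟩, rfl⟩ := hs
      simp
    refine ⟨?_, (u.head?, i+1, Dir.spawn), (q', [none]), ?_, ?_, ?_, ?_⟩
    · intro w j hw
      by_cases e : (u ++ [], i + 1) = (w, j)
      · simp only [Prod.mk.injEq, List.append_nil] at e
        rw [← e.1]; exact hu
      · apply hg w j
        simpa only [Finsupp.add_apply, Finsupp.single_apply, e, if_false, add_zero] using hw
    · simp [SigmaI]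
    · exact ⟨_, rfl, by simp⟩
    · exact PDAStep.mk (P := stratPDA M k F) (w := []) (STrans.intr i hr hl)
    · intro γ
      refine ⟨?_, ?_, ?_⟩
      · match u, hu with
        | [], _ => simp
        | [a], _ => simp [Finsupp.single_apply, List.count_cons]
      · simp [Finsupp.single_apply]
      · intro j hj
        simp [Finsupp.single_apply]
        omega
  | @res q γ q' w i V hr =>
    have hi : i = l := by
      rcases hI with ⟨w', j, e, hj⟩ | ⟨w', j, e, hj⟩ <;> simp at e hj <;> omega
    subst hi
    have hw : w = [] := by
      have := hg (γ :: w) i (by simp)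
      simpa using this
    subst hw
    obtain rfl : s = none := by
      simpa [eq_comm] using hs
    refine ⟨?_, (some γ, i, Dir.resume), (q', [some (some γ, i)]), ?_, ?_, ?_, ?_⟩
    · intro w j hw
      apply hg w j
      simp only [Finsupp.add_apply] at hw ⊢
      omega
    · simp [SigmaI]
    · exact ⟨_, rfl, by simp⟩
    · exact PDAStep.mk (P := stratPDA M k F) (w := []) (STrans.res i hr hl)
    · intro γ
      refine ⟨?_, ?_, ?_⟩
      · simp [Finsupp.single_apply]
      · simp [Finsupp.single_apply, List.count_cons]
      · intro j hj
        simp [Finsupp.single_apply]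
        omega

lemma fwd (M : DCPS Q Γ) (hd : IsDCFS M) (k : ℕ) (F : Set Q) (l : ℕ) (hl : l ≤ k)
    {c c' : Config Q Γ} (h : ReachesIn M {l} c c') : ∀ (x : Q × List (PSym Γ))
    (_ : Rel c x) (_ : GoodIdle c),
    GoodIdle c' ∧ ∃ v y, (∀ a ∈ v, a ∈ SigmaI l) ∧ Rel c' y ∧ PDATrace (stratPDA M k F) v x y ∧
      ∀ γ : Γ, c'.idle ([γ], l + 1) = c.idle ([γ], l + 1)
          + v.count ((some γ, l + 1, Dir.spawn) : Lbl Γ) ∧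
        c'.idle ([γ], l) + v.count ((some γ, l, Dir.resume) : Lbl Γ) = c.idle ([γ], l) ∧
        ∀ j, l + 1 < j → c'.idle ([γ], j) = c.idle ([γ], j) := by
  induction h using Relation.ReflTransGen.head_induction_on with
  | refl =>
    intro x hx hg
    exact ⟨hg, [], x, by simp, hx, .nil _, by simp⟩
  | head hs _ ih =>
    intro x hx hg
    obtain ⟨r, hs⟩ := hs
    obtain ⟨hg1, a, y, ha, hy, hp, hc⟩ := fwd_step M hd k F l hl hs x hx hg
    obtain ⟨hg2, v, z, hv, hz, ht, hc'⟩ := ih y hy hg1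
    refine ⟨hg2, a :: v, z, ?_, hz, .cons hp ht, ?_⟩
    · exact List.forall_mem_cons.mpr ⟨ha, hv⟩
    · intro γ
      obtain ⟨h1, h2, h3⟩ := hc γ
      obtain ⟨h1', h2', h3'⟩ := hc' γ
      rw [show a :: v = [a] ++ v from rfl, List.count_append, List.count_append]
      refine ⟨by omega, by omega, fun j hj => (h3' j hj).trans (h3 j hj)⟩

lemma bwd_step (M : DCPS Q Γ) (hd : IsDCFS M) (k : ℕ) (F : Set Q) (l : ℕ)
    {a : Lbl Γ} {x y : Q × List (PSym Γ)} (h : PDAStep (stratPDA M k F) (some a) x y)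
    (ha : a ∈ SigmaI l) (c : Config Q Γ) (hx : Rel c x)
    (hc : ∀ γ : Γ, [a].count ((some γ, l, Dir.resume) : Lbl Γ) ≤ c.idle ([γ], l)) :
    ∃ c' r, Rel c' y ∧ StepIn M {l} r c c' ∧ ∀ γ : Γ,
      c.idle ([γ], l + 1) + [a].count ((some γ, l + 1, Dir.spawn) : Lbl Γ)
        ≤ c'.idle ([γ], l + 1) ∧
      c.idle ([γ], l) ≤ c'.idle ([γ], l) + [a].count ((some γ, l, Dir.resume) : Lbl Γ) := by
  obtain ⟨s, rfl, hs⟩ := hx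
  obtain ⟨p, act, V⟩ := c
  simp only at hs hc ⊢
  subst hs
  cases h with
  | mk h =>
  cases h with
  | @silent _ γ q' u i hr hi =>
    obtain rfl : i = l := by simpa [SigmaI] using ha
    have hu : u.length ≤ 1 := hd _ hr
    refine ⟨_, _, ?_, ⟨Step.cr (w := []) hr, Or.inl ⟨_, _, rfl, rfl⟩⟩, ?_⟩
    · exact ⟨_, rfl, by simp [head_toList hu]⟩
    · intro γ; simp [spawnOf]
  | @spawn _ γ q' u b i hr hi =>
    obtain rfl : i = l := by simpa [SigmaI] using ha
    have hu : u.length ≤ 1 := hd _ hr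
    refine ⟨_, _, ?_, ⟨Step.cr (w := []) hr, Or.inl ⟨_, _, rfl, rfl⟩⟩, ?_⟩
    · exact ⟨_, rfl, by simp [head_toList hu]⟩
    · intro γ; simp [spawnOf, Finsupp.single_apply, List.count_cons]
  | @intr _ γ q' u i hr hi =>
    obtain rfl : i = l := by simpa [SigmaI] using ha
    have hu : u.length ≤ 1 := hd _ hr
    refine ⟨_, _, ?_, ⟨Step.intr (w := []) hr, Or.inl ⟨_, _, rfl, rfl⟩⟩, ?_⟩
    · exact ⟨_, rfl, by simp⟩
    · intro γ
      match u, hu with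
      | [], _ => simp
      | [a], _ => simp [Finsupp.single_apply, List.count_cons]
  | @res _ γ q' i hr hi =>
    obtain rfl : i = l := by simpa [SigmaI] using ha
    have h1 := hc γ
    obtain ⟨V', rfl⟩ : ∃ V', V = V' + Finsupp.single ([γ], i) 1 := by
      refine ⟨V - Finsupp.single ([γ], i) 1, (tsub_add_cancel_of_le ?_).symm⟩
      rw [Finsupp.single_le_iff]
      simpa using h1
    refine ⟨_, _, ?_, ⟨Step.res (w := []) hr, Or.inr ⟨_, _, rfl, rfl⟩⟩, ?_⟩
    · exact ⟨_, rfl, by simp⟩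
    · intro γ
      simp [Finsupp.single_apply, List.count_cons]

lemma bwd (M : DCPS Q Γ) (hd : IsDCFS M) (k : ℕ) (F : Set Q) (l : ℕ)
    {v : List (Lbl Γ)} {x y : Q × List (PSym Γ)} (h : PDATrace (stratPDA M k F) v x y) :
    (∀ a ∈ v, a ∈ SigmaI l) → ∀ (c : Config Q Γ) (_ : Rel c x)
    (_ : ∀ γ : Γ, v.count ((some γ, l, Dir.resume) : Lbl Γ) ≤ c.idle ([γ], l)),
    ∃ c', Rel c' y ∧ ReachesIn M {l} c c' ∧ ∀ γ : Γ,
      c.idle ([γ], l + 1) + v.count ((some γ, l + 1, Dir.spawn) : Lbl Γ)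
        ≤ c'.idle ([γ], l + 1) := by
  induction h with
  | nil => 
    intro _ c hc _
    exact ⟨c, hc, .refl, by simp⟩
  | eps s _ _ =>
    cases s with
    | mk h => cases h
  | @cons a v x y z s t ih =>
    intro hv c hx hc
    simp only [List.mem_cons, forall_eq_or_imp] at hv
    rw [show a :: v = [a] ++ v from rfl] at hc ⊢
    simp only [List.count_append] at hc ⊢
    obtain ⟨c1, r, hy, hs, hc1⟩ := bwd_step M hd k F l s hv.1 c hx
      (fun γ => by have := hc γ; omega)
    obtain ⟨c2, hz, hr, hc2⟩ := ih hv.2 c1 hy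
      (fun γ => by have := hc γ; have := (hc1 γ).2; omega)
    refine ⟨c2, hz, .head ⟨r, hs⟩ hr, fun γ => ?_⟩
    have := hc2 γ; have := (hc1 γ).1; omega

lemma fwd_all (M : DCPS Q Γ) (hd : IsDCFS M) (k : ℕ) (F : Set Q) (c : ℕ → Config Q Γ)
    (h0 : c 0 = initConfig M) (hc : ∀ l ≤ k, ReachesIn M {l} (c l) (c (l + 1))) :
    ∀ n ≤ k + 1, ∃ σ : ℕ → List (Lbl Γ), (∀ i < n, ∀ x ∈ σ i, x ∈ SigmaI i) ∧
      (∃ y, Rel (c n) y ∧ PDATrace (stratPDA M k F) ((List.range n).flatMap σ)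
        (M.q0, [(none : PSym Γ)]) y) ∧ GoodIdle (c n) ∧
      (∀ γ j, n < j → (c n).idle ([γ], j) = 0) ∧
      (∀ γ, (c n).idle ([γ], n) =
        (if n = 0 then [((some M.γ0, 0, Dir.spawn) : Lbl Γ)] else σ (n - 1)).count
            ((some γ, n, Dir.spawn) : Lbl Γ)) ∧
      (∀ (γ : Γ), ∀ i < n,
        (σ i).count ((some γ, i, Dir.resume) : Lbl Γ) ≤
          (if i = 0 then [((some M.γ0, 0, Dir.spawn) : Lbl Γ)] else σ (i - 1)).count
            ((some γ, i, Dir.spawn) : Lbl Γ)) := by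
  intro n
  induction n with
  | zero =>
    intro _
    refine ⟨fun _ => [], by simp, ⟨(M.q0, [none]), ?_, .nil _⟩, ?_, ?_, ?_, by simp⟩
    · rw [h0]; exact ⟨none, rfl, rfl⟩
    · rw [h0]; intro w i hw
      by_cases e : ([M.γ0], 0) = (w, i)
      · simp only [Prod.mk.injEq] at e
        simp [← e.1]
      · simp [initConfig, Finsupp.single_apply, e] at hw
    · intro γ j hj
      rw [h0]; simp [initConfig, Finsupp.single_apply]; omega
    · intro γ
      rw [h0]; simp [initConfig, Finsupp.single_apply, List.count_cons]
  | succ n ih =>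
    intro hn
    obtain ⟨σ, hσ, ⟨y, hy, ht⟩, hg, hz, he, hf⟩ := ih (by omega)
    obtain ⟨hg', v, y', hv, hy', ht', hcnt⟩ := fwd M hd k F n (by omega) (hc n (by omega)) y hy hg
    have hlt : ∀ i < n, Function.update σ n v i = σ i := fun i hi =>
      Function.update_of_ne (by omega) _ _
    have hpre : ∀ i ≤ n, (if i = 0 then [((some M.γ0, 0, Dir.spawn) : Lbl Γ)]
        else Function.update σ n v (i - 1)) =
        (if i = 0 then [((some M.γ0, 0, Dir.spawn) : Lbl Γ)] else σ (i - 1)) := by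
      intro i hi
      split_ifs with h
      · rfl
      · exact hlt _ (by omega)
    refine ⟨Function.update σ n v, ?_, ⟨y', hy', ?_⟩, hg', ?_, ?_, ?_⟩
    · intro i hi
      rcases Nat.lt_succ_iff_lt_or_eq.mp hi with h | rfl
      · rw [hlt i h]; exact hσ i h
      · simpa using hv
    · rw [List.range_succ, List.flatMap_append]
      have : (List.range n).flatMap (Function.update σ n v) = (List.range n).flatMap σ :=
        List.flatMap_congr (fun i hi => hlt i (List.mem_range.mp hi))
      rw [this]
      simpa using trace_append ht ht'
    · intro γ j hj
      rw [(hcnt γ).2.2 j hj]; exact hz γ j (by omega)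
    · intro γ
      rw [(hcnt γ).1, hz γ _ (by omega)]
      simp
    · intro γ i hi
      rw [hpre i (by omega)]
      rcases Nat.lt_succ_iff_lt_or_eq.mp hi with h | rfl
      · rw [hlt i h]; exact hf γ i h
      · rw [← he γ, Function.update_self]
        have := (hcnt γ).2.1
        omega

lemma bwd_all (M : DCPS Q Γ) (hd : IsDCFS M) (k : ℕ) (F : Set Q) (σ : ℕ → List (Lbl Γ))
    (hσ : ∀ i ≤ k, ∀ x ∈ σ i, x ∈ SigmaI i)
    (hf : ∀ (γ : Γ), ∀ i ≤ k,
        (σ i).count ((some γ, i, Dir.resume) : Lbl Γ) ≤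
          (if i = 0 then [((some M.γ0, 0, Dir.spawn) : Lbl Γ)] else σ (i - 1)).count
            ((some γ, i, Dir.spawn) : Lbl Γ)) :
    ∀ n ≤ k + 1, ∀ y, PDATrace (stratPDA M k F) ((List.range n).flatMap σ)
        (M.q0, [(none : PSym Γ)]) y →
      ∃ c : ℕ → Config Q Γ, c 0 = initConfig M ∧
        (∀ l < n, ReachesIn M {l} (c l) (c (l + 1))) ∧ Rel (c n) y ∧
        ∀ γ, (if n = 0 then [((some M.γ0, 0, Dir.spawn) : Lbl Γ)] else σ (n - 1)).count
            ((some γ, n, Dir.spawn) : Lbl Γ) ≤ (c n).idle ([γ], n) := by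
  intro n
  induction n with
  | zero =>
    intro _ y h
    have hy : y = (M.q0, [(none : PSym Γ)]) := by
      simp only [List.range_zero, List.flatMap_nil] at h
      cases h with
      | nil => rfl
      | eps s _ =>
        cases s with
        | mk h => cases h
    subst hy
    refine ⟨fun _ => initConfig M, rfl, by simp, ⟨none, rfl, rfl⟩, ?_⟩
    intro γ
    simp [initConfig, Finsupp.single_apply, List.count_cons]
  | succ n ih =>
    intro hn y h
    rw [List.range_succ, List.flatMap_append] at h
    obtain ⟨x, h1, h2⟩ := trace_split h _ _ rfl
    simp only [List.flatMap_cons, List.flatMap_nil, List.append_nil] at h2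
    obtain ⟨c, h0, hr, hx, hc⟩ := ih (by omega) x h1
    obtain ⟨c', hy, hr', hc'⟩ := bwd M hd k F n h2 (hσ n (by omega)) (c n) hx
      (fun γ => (hf γ n (by omega)).trans (hc γ))
    refine ⟨Function.update c (n + 1) c', ?_, ?_, ?_, ?_⟩
    · rw [Function.update_of_ne (by omega)]; exact h0
    · intro l hl
      rw [Function.update_of_ne (show l ≠ n + 1 by omega)]
      rcases Nat.lt_succ_iff_lt_or_eq.mp hl with h | rfl
      · rw [Function.update_of_ne (by omega)]; exact hr l h
      · rw [Function.update_self]; exact hr'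
    · rw [Function.update_self]; exact hy
    · intro γ
      rw [Function.update_self]
      have := hc' γ
      simp
      omega

end Helpers

/-- Some state of `F` is `k`-stratified reachable by the DCFS `M`
iff there are words `σ_0 ∈ Σ_0*, …, σ_k ∈ Σ_k*` whose concatenation is a trace of the
stratified-trace PDA from `(q₀,⊥)` to `F × {⊥}` and which satisfy the flow condition
`|σ_i|_{(γ,i,◁)} ≤ |σ_{i−1}|_{(γ,i,▷)}` (with `σ_{−1} = (γ₀,0,▷)`). -/
theorem ssrK_iff_strat_trace
    (Q Γ : Type) [Fintype Q] [Fintype Γ] [DecidableEq Q] [DecidableEq Γ]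
    (M : DCPS Q Γ) (hfin : M.rules.Finite) (hdcfs : IsDCFS M)
    (k : ℕ) (F : Set Q) :
    (∃ q ∈ F, KStratifiedReachable M k q) ↔
    ∃ σ : ℕ → List (Lbl Γ),
      (∀ i ≤ k, ∀ x ∈ σ i, x ∈ SigmaI i) ∧
      (∃ p ∈ F, PDATrace (stratPDA M k F) ((List.range (k + 1)).flatMap σ)
        (M.q0, [(none : PSym Γ)]) (p, [(none : PSym Γ)])) ∧
      (∀ (γ : Γ), ∀ i ≤ k,
        (σ i).count ((some γ, i, Dir.resume) : Lbl Γ) ≤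
          (if i = 0 then [((some M.γ0, 0, Dir.spawn) : Lbl Γ)] else σ (i - 1)).count
            ((some γ, i, Dir.spawn) : Lbl Γ)) := by
  constructor
  · rintro ⟨q, hq, c, h0, hc, hact, hst⟩
    obtain ⟨σ, hσ, ⟨y, ⟨s, rfl, hs⟩, ht⟩, -, -, -, hf⟩ := fwd_all M hdcfs k F c h0 hc (k + 1) le_rfl
    refine ⟨σ, fun i hi => hσ i (by omega), ⟨q, hq, ?_⟩, fun γ i hi => hf γ i (by omega)⟩
    rw [hact] at hs
    obtain rfl : s = none := by simpa [eq_comm] using hs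
    rw [hst] at ht
    exact ht
  · rintro ⟨σ, hσ, ⟨p, hp, ht⟩, hf⟩
    obtain ⟨c, h0, hr, ⟨s, hs, ha⟩, -⟩ := bwd_all M hdcfs k F σ hσ hf (k + 1) le_rfl _ ht
    simp only [Prod.mk.injEq, List.cons.injEq, and_true] at hs
    obtain ⟨rfl, rfl⟩ := hs
    exact ⟨_, hp, c, h0, fun l hl => hr l (by omega), ha, rfl⟩


end DCPSFormal
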